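/- arXiv:2412.20435 — 8 statements merged into one kernel-verified Lean document; each statement's English description precedes it below -/
import Mathlib

section
/- Let k be a field and let u₁, …, u₆ ∈ k be six pairwise distinct nonzero elements. Then there exists a nonzero quadratic form q(x, y, z) = αx² + βy² + γz² + δxy + εxz + ζyz with coefficients in k, not all zero, vanishing at all six points (uᵢ⁻², uᵢ⁻³, 1) for i = 1, …, 6, if and only if u₁ + u₂ + u₃ + u₄ + u₅ + u₆ = 0. Equivalently, the six points [uᵢ⁻² : uᵢ⁻³ : 1] of ℙ²(k) lie on a common conic if and only if the sum of the uᵢ is zero. -/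
open Polynomial in
/-- The polynomial `∏ (X - uᵢ)` over six points has sextic, quintic coefficients `1`, `-∑ uᵢ`. -/
theorem prod_X_sub_C_fin_six {k : Type*} [Field k] (u : Fin 6 → k) :
    (∏ i, (X - C (u i))).natDegree = 6 ∧ (∏ i, (X - C (u i))).coeff 6 = 1 ∧
      (∏ i, (X - C (u i))).coeff 5 = -∑ i, u i := by
  have hdeg : (∏ i, (X - C (u i))).natDegree = 6 := by simp
  have hmonic : (∏ i, (X - C (u i))).Monic := monic_prod_X_sub_C u Finset.univ
  refine ⟨hdeg, ?_, ?_⟩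
  · simpa only [hdeg] using hmonic.coeff_natDegree
  · simpa using prod_X_sub_C_coeff_card_pred Finset.univ u (by simp)

open Polynomial in
/-- A polynomial of degree at most six vanishing at six distinct points is a multiple of
`∏ (X - uᵢ)`. -/
theorem eq_C_mul_prod_X_sub_C_of_eval_eq_zero {k : Type*} [Field k] {u : Fin 6 → k}
    (hinj : Function.Injective u) {P : k[X]} (hP : P.natDegree ≤ 6)
    (hroot : ∀ i, P.eval (u i) = 0) :
    P = C (P.coeff 6) * ∏ i, (X - C (u i)) := by
  obtain ⟨hdeg, hlead, -⟩ := prod_X_sub_C_fin_six u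
  rw [← sub_eq_zero]
  refine eq_zero_of_degree_lt_of_eval_index_eq_zero Finset.univ (v := u) hinj.injOn ?_ ?_
  · rw [Finset.card_univ, Fintype.card_fin, degree_lt_iff_coeff_zero]
    intro m hm
    rcases hm.eq_or_lt with rfl | hm
    · simp [hlead]
    · rw [coeff_sub, coeff_C_mul, coeff_eq_zero_of_natDegree_lt (hP.trans_lt hm),
        coeff_eq_zero_of_natDegree_lt (hdeg.trans_lt hm), mul_zero, sub_zero]
  · intro i _
    rw [eval_sub, eval_mul, hroot i, eval_prod,
      Finset.prod_eq_zero (Finset.mem_univ i) (by simp), mul_zero, sub_zero]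

/-- Restricting a quadratic form to `(v⁻², v⁻³, 1)` gives, up to `v⁻⁶`, a sextic in `v`
without quintic term. -/
theorem quadraticForm_cuspidal_eq_zero_iff {k : Type*} [Field k] {v : k} (hv : v ≠ 0)
    (α β γ δ ε ζ : k) :
    α * (v⁻¹ ^ 2) ^ 2 + β * (v⁻¹ ^ 3) ^ 2 + γ * 1 ^ 2 + δ * (v⁻¹ ^ 2 * v⁻¹ ^ 3) +
        ε * (v⁻¹ ^ 2 * 1) + ζ * (v⁻¹ ^ 3 * 1) = 0 ↔
      γ * v ^ 6 + ε * v ^ 4 + ζ * v ^ 3 + α * v ^ 2 + δ * v + β = 0 := by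
  have h : γ * v ^ 6 + ε * v ^ 4 + ζ * v ^ 3 + α * v ^ 2 + δ * v + β =
      v ^ 6 * (α * (v⁻¹ ^ 2) ^ 2 + β * (v⁻¹ ^ 3) ^ 2 + γ * 1 ^ 2 + δ * (v⁻¹ ^ 2 * v⁻¹ ^ 3) +
        ε * (v⁻¹ ^ 2 * 1) + ζ * (v⁻¹ ^ 3 * 1)) := by
    field_simp
    ring
  rw [h, mul_eq_zero, or_iff_right (pow_ne_zero 6 hv)]

/-- For six pairwise distinct nonzero elements `u₁, …, u₆` of a field `k`, there is
a nonzero quadratic form `α x² + β y² + γ z² + δ x y + ε x z + ζ y z` vanishing at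
all six points `(uᵢ⁻², uᵢ⁻³, 1)` if and only if `u₁ + ⋯ + u₆ = 0`; i.e. the six
points `[uᵢ⁻² : uᵢ⁻³ : 1]` of `ℙ²(k)` lie on a common conic iff `∑ uᵢ = 0`. -/
theorem stmt_6 {k : Type*} [Field k] (u : Fin 6 → k)
    (h0 : ∀ i, u i ≠ 0) (hinj : Function.Injective u) :
    (∃ α β γ δ ε ζ : k, ¬(α = 0 ∧ β = 0 ∧ γ = 0 ∧ δ = 0 ∧ ε = 0 ∧ ζ = 0) ∧
      ∀ i, α * ((u i)⁻¹ ^ 2) ^ 2 + β * ((u i)⁻¹ ^ 3) ^ 2 + γ * 1 ^ 2 +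
        δ * ((u i)⁻¹ ^ 2 * (u i)⁻¹ ^ 3) + ε * ((u i)⁻¹ ^ 2 * 1) +
        ζ * ((u i)⁻¹ ^ 3 * 1) = 0) ↔
      ∑ i, u i = 0 := by
  obtain ⟨hdeg, hlead, hnext⟩ := prod_X_sub_C_fin_six u
  simp only [quadraticForm_cuspidal_eq_zero_iff (h0 _)]
  constructor
  · rintro ⟨α, β, γ, δ, ε, ζ, hne, hroot⟩
    set P : Polynomial k := .C γ * .X ^ 6 + .C ε * .X ^ 4 + .C ζ * .X ^ 3 + .C α * .X ^ 2 +
      .C δ * .X + .C β with hP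
    have hP6 : P.coeff 6 = γ := by simp [hP]
    have hP5 : P.coeff 5 = 0 := by simp [hP]
    have hmul := eq_C_mul_prod_X_sub_C_of_eval_eq_zero hinj (P := P)
      (by rw [hP]; compute_degree) (fun i => by simpa [hP] using hroot i)
    rw [hP6] at hmul
    have hγ : γ ≠ 0 := by
      intro hγ
      have hzero : P = 0 := by rw [hmul, hγ, Polynomial.C_0, zero_mul]
      have hcoeff (n : ℕ) : P.coeff n = 0 := by rw [hzero, Polynomial.coeff_zero]
      apply hne
      refine ⟨?_, ?_, hγ, ?_, ?_, ?_⟩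
      · simpa [hP, Polynomial.coeff_X, Polynomial.coeff_C] using hcoeff 2
      · simpa [hP, Polynomial.coeff_X, Polynomial.coeff_C] using hcoeff 0
      · simpa [hP, Polynomial.coeff_X, Polynomial.coeff_C] using hcoeff 1
      · simpa [hP, Polynomial.coeff_X, Polynomial.coeff_C] using hcoeff 4
      · simpa [hP, Polynomial.coeff_X, Polynomial.coeff_C] using hcoeff 3
    rw [hmul, Polynomial.coeff_C_mul, hnext] at hP5
    simpa [hγ] using hP5
  · intro hsum
    set N : Polynomial k := ∏ i, (.X - .C (u i)) with hN
    refine ⟨N.coeff 2, N.coeff 0, N.coeff 6, N.coeff 1, N.coeff 4, N.coeff 3, ?_, fun i => ?_⟩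
    · rintro ⟨-, -, h6, -⟩
      exact one_ne_zero (hlead.symm.trans h6)
    · have hroot : N.eval (u i) = 0 := by
        rw [hN, Polynomial.eval_prod]
        exact Finset.prod_eq_zero (Finset.mem_univ i) (by simp)
      rw [Polynomial.eval_eq_sum_range, hdeg] at hroot
      simp only [Finset.sum_range_succ, Finset.sum_range_zero, hnext, hsum] at hroot
      linear_combination hroot
end

section
/- With the notation of the even-case construction: in the polynomial ring R[u] one has p₁ = 0 and q₁ = 0. -/
open Polynomial

/-- The even coefficients of `X * P(X ^ 2)` of positive index vanish. -/
theorem coeff_X_mul_expand_two_of_even {A : Type*} [CommRing A] (P : Polynomial A) (k : ℕ) :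
    (X * expand A 2 P).coeff (2 * k + 1 + 1) = 0 := by
  rw [coeff_X_mul, coeff_expand two_pos, if_neg (by omega)]

/-- Even case: in `R[u]` one has `p₁ = 0` and `q₁ = 0`. -/
theorem stmt_7
    {R : Type*} [CommRing R]
    (h2 : IsUnit (2 : R)) (h3 : IsUnit (3 : R)) (h5 : IsUnit (5 : R)) (h7 : IsUnit (7 : R))
    (Q : Polynomial (Polynomial R))
    (hQ : Q = X ^ 3 * (X ^ 2 - 1) ^ 2 * (X ^ 2 - 4) * (X ^ 2 - 9) ^ 2 * (X ^ 2 - 16) *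
      (X ^ 2 - C X) ^ 2 *
      (X ^ 4 - (2 + 2 * C X) * X ^ 2 + (1 - C X) ^ 2) *
      (X ^ 4 - (18 + 2 * C X) * X ^ 2 + (9 - C X) ^ 2))
    (ε : ℕ → Polynomial R) (hε : ∀ m ≤ 27, ε m = Q.coeff (27 - m))
    (p₂ p₁ q₂ p₀ q₁ q₀ : Polynomial R)
    (hp₂ : 12 * p₂ = ε 2)
    (hp₁ : 48 * p₁ = ε 5)
    (hq₂ : 96 * q₂ = ε 6 - 168 * p₂ ^ 3)
    (hp₀ : 480 * p₀ = ε 8 - 294 * p₂ ^ 4 - 528 * p₂ * q₂)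
    (hq₁ : 1344 * q₁ = ε 9 - 1008 * p₁ * p₂ ^ 2)
    (hq₀ : 17280 * q₀ = ε 12 - 608 * p₁ ^ 2 * p₂ - 4768 * p₀ * p₂ ^ 2 - 252 * p₂ ^ 6 -
      1200 * p₂ ^ 3 * q₂ + 1248 * q₂ ^ 2)
    : p₁ = 0 ∧ q₁ = 0 := by
  have hodd : Q = X * expand (Polynomial R) 2
      (X * (X - 1) ^ 2 * (X - 4) * (X - 9) ^ 2 * (X - 16) * (X - C X) ^ 2 *
        (X ^ 2 - (2 + 2 * C X) * X + (1 - C X) ^ 2) *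
        (X ^ 2 - (18 + 2 * C X) * X + (9 - C X) ^ 2)) := by
    rw [hQ]
    simp only [map_mul, map_pow, map_sub, map_add, map_one, map_ofNat, expand_X, expand_C]
    ring
  have hε5 : ε 5 = 0 := by
    rw [hε 5 (by norm_num), hodd]
    exact coeff_X_mul_expand_two_of_even _ 10
  have hε9 : ε 9 = 0 := by
    rw [hε 9 (by norm_num), hodd]
    exact coeff_X_mul_expand_two_of_even _ 8
  have u2 : IsUnit (2 : Polynomial R) := isUnit_C.mpr h2
  have u3 : IsUnit (3 : Polynomial R) := isUnit_C.mpr h3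
  have u7 : IsUnit (7 : Polynomial R) := isUnit_C.mpr h7
  have u48 : IsUnit (48 : Polynomial R) := by
    convert (u2.pow 4).mul u3 using 1
    norm_num
  have u1344 : IsUnit (1344 : Polynomial R) := by
    convert ((u2.pow 6).mul u3).mul u7 using 1
    norm_num
  have hp : p₁ = 0 := u48.mul_right_eq_zero.mp (hp₁.trans hε5)
  refine ⟨hp, u1344.mul_right_eq_zero.mp ?_⟩
  rw [hq₁, hε9, hp]
  ring
end

section
/- With the notation of the even-case construction: the Weierstrass curve over R[u] with coefficients (a₁, a₂, a₃, a₄, a₆) = (0, 0, 0, p₀, q₀), i.e. the curve y² = x³ + p₀x + q₀, has discriminant zero; equivalently, −16(4p₀³ + 27q₀²) = 0 in R[u]. -/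
open Polynomial

/-- The expansion of `Q(u, S)` in powers of `S`. -/
theorem evenCase_expansion {A : Type*} [CommRing A] (u : A) :
    (X ^ 3 * (X ^ 2 - 1) ^ 2 * (X ^ 2 - 4) * (X ^ 2 - 9) ^ 2 * (X ^ 2 - 16) *
      (X ^ 2 - C u) ^ 2 *
      (X ^ 4 - (2 + 2 * C u) * X ^ 2 + (1 - C u) ^ 2) *
      (X ^ 4 - (18 + 2 * C u) * X ^ 2 + (9 - C u) ^ 2) : A[X]) =
      X ^ 27 +
      C (-60 - 6 * u) * X ^ 25 +
      C (1500 + 300 * u + 15 * u ^ 2) * X ^ 23 +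
      C (-20360 - 6220 * u - 640 * u ^ 2 - 20 * u ^ 3) * X ^ 21 +
      C (163590 + 71140 * u + 10750 * u ^ 2 + 760 * u ^ 3 + 15 * u ^ 4) * X ^ 19 +
      C (-796560 - 494856 * u - 97200 * u ^ 2 - 10368 * u ^ 3 - 540 * u ^ 4 - 6 * u ^ 5) * X ^ 17 +
      C (2328220 + 2117020 * u + 558616 * u ^ 2 + 66060 * u ^ 3 + 6448 * u ^ 4 + 220 * u ^ 5 + u ^ 6) * X ^ 15 +
      C (-3985560 - 5285812 * u - 2149300 * u ^ 2 - 255556 * u ^ 3 - 27100 * u ^ 4 - 2692 * u ^ 5 - 40 * u ^ 6) * X ^ 13 +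
      C (3886785 + 7261740 * u + 4680762 * u ^ 2 + 961680 * u ^ 3 + 7971 * u ^ 4 + 11280 * u ^ 5 + 582 * u ^ 6) * X ^ 11 +
      C (-1997460 - 5885298 * u - 4013640 * u ^ 2 - 2574904 * u ^ 3 + 26120 * u ^ 4 + 9002 * u ^ 5 - 3820 * u ^ 6) * X ^ 9 +
      C (419904 + 3061800 * u + 721953 * u ^ 2 + 2080620 * u ^ 3 + 614854 * u ^ 4 - 145820 * u ^ 5 + 11233 * u ^ 6) * X ^ 7 +
      C (-839808 * u - 131220 * u ^ 2 + 664848 * u ^ 3 - 1239480 * u ^ 4 + 231696 * u ^ 5 - 13140 * u ^ 6) * X ^ 5 +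
      C (419904 * u ^ 2 - 933120 * u ^ 3 + 611712 * u ^ 4 - 103680 * u ^ 5 + 5184 * u ^ 6) * X ^ 3 := by
  simp only [map_add, map_sub, map_neg, map_mul, map_pow, map_ofNat]
  ring

/-- Even case: the Weierstrass curve `y² = x³ + p₀x + q₀` over `R[u]` has discriminant zero. -/
theorem stmt_8
    {R : Type*} [CommRing R]
    (h2 : IsUnit (2 : R)) (h3 : IsUnit (3 : R)) (h5 : IsUnit (5 : R)) (h7 : IsUnit (7 : R))
    (Q : Polynomial (Polynomial R))
    (hQ : Q = X ^ 3 * (X ^ 2 - 1) ^ 2 * (X ^ 2 - 4) * (X ^ 2 - 9) ^ 2 * (X ^ 2 - 16) *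
      (X ^ 2 - C X) ^ 2 *
      (X ^ 4 - (2 + 2 * C X) * X ^ 2 + (1 - C X) ^ 2) *
      (X ^ 4 - (18 + 2 * C X) * X ^ 2 + (9 - C X) ^ 2))
    (ε : ℕ → Polynomial R) (hε : ∀ m ≤ 27, ε m = Q.coeff (27 - m))
    (p₂ p₁ q₂ p₀ q₁ q₀ : Polynomial R)
    (hp₂ : 12 * p₂ = ε 2)
    (hp₁ : 48 * p₁ = ε 5)
    (hq₂ : 96 * q₂ = ε 6 - 168 * p₂ ^ 3)
    (hp₀ : 480 * p₀ = ε 8 - 294 * p₂ ^ 4 - 528 * p₂ * q₂)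
    (hq₁ : 1344 * q₁ = ε 9 - 1008 * p₁ * p₂ ^ 2)
    (hq₀ : 17280 * q₀ = ε 12 - 608 * p₁ ^ 2 * p₂ - 4768 * p₀ * p₂ ^ 2 - 252 * p₂ ^ 6 -
      1200 * p₂ ^ 3 * q₂ + 1248 * q₂ ^ 2)
    : -16 * (4 * p₀ ^ 3 + 27 * q₀ ^ 2) = 0 := by
  rw [evenCase_expansion] at hQ
  have e2 : ε 2 = -60 - 6 * X := by
    rw [hε 2 (by norm_num), hQ]
    simp [coeff_X_pow, coeff_C_mul, -map_add, -map_sub, -map_neg, -map_mul, -map_pow]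
  have e5 : ε 5 = 0 := by
    rw [hε 5 (by norm_num), hQ]
    simp [coeff_X_pow, coeff_C_mul, -map_add, -map_sub, -map_neg, -map_mul, -map_pow]
  have e6 : ε 6 = -20360 - 6220 * X - 640 * X ^ 2 - 20 * X ^ 3 := by
    rw [hε 6 (by norm_num), hQ]
    simp [coeff_X_pow, coeff_C_mul, -map_add, -map_sub, -map_neg, -map_mul, -map_pow]
  have e8 : ε 8 = 163590 + 71140 * X + 10750 * X ^ 2 + 760 * X ^ 3 + 15 * X ^ 4 := by
    rw [hε 8 (by norm_num), hQ]
    simp [coeff_X_pow, coeff_C_mul, -map_add, -map_sub, -map_neg, -map_mul, -map_pow]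
  have e12 : ε 12 = 2328220 + 2117020 * X + 558616 * X ^ 2 + 66060 * X ^ 3 + 6448 * X ^ 4 + 220 * X ^ 5 + X ^ 6 := by
    rw [hε 12 (by norm_num), hQ]
    simp [coeff_X_pow, coeff_C_mul, -map_add, -map_sub, -map_neg, -map_mul, -map_pow]
  have u30 : IsUnit (30 : R[X]) := by
    have h := ((h2.mul h3).mul h5).map (C : R →+* R[X])
    simp only [map_mul, map_ofNat] at h
    convert h using 1
    norm_num
  -- Every denominator below divides a power of `30`.
  have cancel {a b : R[X]} (k : ℕ) (h : 30 ^ k * a = 30 ^ k * b) : a = b :=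
    (u30.pow k).mul_left_cancel h
  have p1_eq : p₁ = 0 := cancel 4 (by linear_combination 16875 * (hp₁.trans e5))
  have p2_eq : 2 * p₂ = -10 - X := cancel 1 (by linear_combination 5 * (hp₂.trans e2))
  have p2_pow (n : ℕ) : 2 ^ n * p₂ ^ n = (-10 - X) ^ n := by rw [← p2_eq, mul_pow]
  have q2_eq : 96 * q₂ = 640 + 80 * X - 10 * X ^ 2 + X ^ 3 := by
    linear_combination hq₂ + e6 - 21 * p2_pow 3
  have p0_eq : 768 * p₀ = -(X ^ 2 - 20 * X + 64) ^ 2 := by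
    have p2q2 := congrArg₂ (· * ·) p2_eq q2_eq
    exact cancel 1 (by linear_combination 48 * (hp₀ + e8) - 882 * p2_pow 4 - 132 * p2q2)
  have q0_eq : 55296 * q₀ = (X ^ 2 - 20 * X + 64) ^ 3 := by
    have p0p2 := congrArg₂ (· * ·) p0_eq (p2_pow 2)
    have p2q2 := congrArg₂ (· * ·) (p2_pow 3) q2_eq
    have q2q2 := congrArg₂ (· * ·) q2_eq q2_eq
    rw [p1_eq] at hq₀
    exact cancel 1 (by
      linear_combination 96 * (hq₀ + e12) - 149 * p0p2 - 378 * p2_pow 6 - 150 * p2q2 + 13 * q2q2)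
  have p0_cube := congrArg (· ^ 3) p0_eq
  have q0_sq := congrArg (· ^ 2) q0_eq
  exact cancel 18 (by linear_combination -54736736297607421875 * p0_cube - 54736736297607421875 * q0_sq)
end

section
/- With the notation of the even-case construction: the c₄-invariant of the Weierstrass curve y² = x³ + p₀x + q₀ over R[u], namely −48p₀, equals (u−4)²(u−16)²/16 in R[u]. -/
open Polynomial

/-- Even case: the `c₄`-invariant `−48p₀` of `y² = x³ + p₀x + q₀` equals `(u−4)²(u−16)²/16` in `R[u]`. -/
theorem stmt_9
    {R : Type*} [CommRing R]
    (h2 : IsUnit (2 : R)) (h3 : IsUnit (3 : R)) (h5 : IsUnit (5 : R)) (h7 : IsUnit (7 : R))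
    (Q : Polynomial (Polynomial R))
    (hQ : Q = X ^ 3 * (X ^ 2 - 1) ^ 2 * (X ^ 2 - 4) * (X ^ 2 - 9) ^ 2 * (X ^ 2 - 16) *
      (X ^ 2 - C X) ^ 2 *
      (X ^ 4 - (2 + 2 * C X) * X ^ 2 + (1 - C X) ^ 2) *
      (X ^ 4 - (18 + 2 * C X) * X ^ 2 + (9 - C X) ^ 2))
    (ε : ℕ → Polynomial R) (hε : ∀ m ≤ 27, ε m = Q.coeff (27 - m))
    (p₂ p₁ q₂ p₀ q₁ q₀ : Polynomial R)
    (hp₂ : 12 * p₂ = ε 2)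
    (hp₁ : 48 * p₁ = ε 5)
    (hq₂ : 96 * q₂ = ε 6 - 168 * p₂ ^ 3)
    (hp₀ : 480 * p₀ = ε 8 - 294 * p₂ ^ 4 - 528 * p₂ * q₂)
    (hq₁ : 1344 * q₁ = ε 9 - 1008 * p₁ * p₂ ^ 2)
    (hq₀ : 17280 * q₀ = ε 12 - 608 * p₁ ^ 2 * p₂ - 4768 * p₀ * p₂ ^ 2 - 252 * p₂ ^ 6 -
      1200 * p₂ ^ 3 * q₂ + 1248 * q₂ ^ 2)
    : 16 * (-48 * p₀) = (X - 4) ^ 2 * (X - 16) ^ 2 := by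
  have hu {n : ℕ} (h : IsUnit (n : R)) : IsUnit (n : R[X]) := by
    simpa using h.map (C : R →+* R[X])
  have h6 : IsUnit (6 : R[X]) := by
    have h : IsUnit ((6 : ℕ) : R) := by
      convert h2.mul h3 using 1
      norm_num
    exact_mod_cast hu h
  have h20 : IsUnit (20 : R[X]) := by
    have h : IsUnit ((20 : ℕ) : R) := by
      convert (h2.pow 2).mul h5 using 1
      norm_num
    exact_mod_cast hu h
  have e2 : ε 2 = -60 - 6 * X := by
    rw [hε 2 (by norm_num), hQ, evenCase_expansion]
    simp only [coeff_add, coeff_C_mul, coeff_X_pow]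
    norm_num
  have e6 : ε 6 = -20360 - 6220 * X - 640 * X ^ 2 - 20 * X ^ 3 := by
    rw [hε 6 (by norm_num), hQ, evenCase_expansion]
    simp only [coeff_add, coeff_C_mul, coeff_X_pow]
    norm_num
  have e8 : ε 8 = 163590 + 71140 * X + 10750 * X ^ 2 + 760 * X ^ 3 + 15 * X ^ 4 := by
    rw [hε 8 (by norm_num), hQ, evenCase_expansion]
    simp only [coeff_add, coeff_C_mul, coeff_X_pow]
    norm_num
  rw [e2] at hp₂
  rw [e6] at hq₂
  rw [e8] at hp₀
  have hp : 2 * p₂ = -(10 + X) := h6.mul_left_cancel (by linear_combination hp₂)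
  have hq : 768 * q₂ = 8 * (-20360 - 6220 * X - 640 * X ^ 2 - 20 * X ^ 3) + 168 * (10 + X) ^ 3 := by
    linear_combination 8 * hq₂ -
      168 * ((2 * p₂) ^ 2 - (2 * p₂) * (10 + X) + (10 + X) ^ 2) * hp
  refine h20.mul_left_cancel ?_
  linear_combination -32 * hp₀ + 11 * (2 * p₂) * hq +
    (11 * (8 * (-20360 - 6220 * X - 640 * X ^ 2 - 20 * X ^ 3) + 168 * (10 + X) ^ 3) +
      588 * ((2 * p₂) ^ 2 + (10 + X) ^ 2) * (2 * p₂ - (10 + X))) * hp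
end

section
/- With the notation of the even-case construction: the discriminant of the monic cubic polynomial x³ − (p₂²/4)x² + (p₀ − p₂q₂/2)x + (q₀ − q₂²/4) over R[u] equals 81u²(u−1)²(u−9)²/64 in R[u]. -/
open Polynomial

/-- The expansion in powers of the outer variable of the degree 27 polynomial `Q(u, S)`. -/
theorem expand_evenCase {K : Type*} [CommRing K] (u : K) :
    (X ^ 3 * (X ^ 2 - 1) ^ 2 * (X ^ 2 - 4) * (X ^ 2 - 9) ^ 2 * (X ^ 2 - 16) *
      (X ^ 2 - C u) ^ 2 *
      (X ^ 4 - (2 + 2 * C u) * X ^ 2 + (1 - C u) ^ 2) *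
      (X ^ 4 - (18 + 2 * C u) * X ^ 2 + (9 - C u) ^ 2) : K[X]) =
      X ^ 27 +
      C (-6 * u - 60) * X ^ 25 +
      C (15 * u ^ 2 + 300 * u + 1500) * X ^ 23 +
      C (-20 * u ^ 3 - 640 * u ^ 2 - 6220 * u - 20360) * X ^ 21 +
      C (15 * u ^ 4 + 760 * u ^ 3 + 10750 * u ^ 2 + 71140 * u + 163590) * X ^ 19 +
      C (-6 * u ^ 5 - 540 * u ^ 4 - 10368 * u ^ 3 - 97200 * u ^ 2 - 494856 * u - 796560) * X ^ 17 +
      C (u ^ 6 + 220 * u ^ 5 + 6448 * u ^ 4 + 66060 * u ^ 3 +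
        558616 * u ^ 2 + 2117020 * u + 2328220) * X ^ 15 +
      C (-40 * u ^ 6 - 2692 * u ^ 5 - 27100 * u ^ 4 - 255556 * u ^ 3 -
        2149300 * u ^ 2 - 5285812 * u - 3985560) * X ^ 13 +
      C (582 * u ^ 6 + 11280 * u ^ 5 + 7971 * u ^ 4 + 961680 * u ^ 3 +
        4680762 * u ^ 2 + 7261740 * u + 3886785) * X ^ 11 +
      C (-3820 * u ^ 6 + 9002 * u ^ 5 + 26120 * u ^ 4 - 2574904 * u ^ 3 -
        4013640 * u ^ 2 - 5885298 * u - 1997460) * X ^ 9 +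
      C (11233 * u ^ 6 - 145820 * u ^ 5 + 614854 * u ^ 4 + 2080620 * u ^ 3 +
        721953 * u ^ 2 + 3061800 * u + 419904) * X ^ 7 +
      C (-13140 * u ^ 6 + 231696 * u ^ 5 - 1239480 * u ^ 4 + 664848 * u ^ 3 -
        131220 * u ^ 2 - 839808 * u) * X ^ 5 +
      C (5184 * u ^ 6 - 103680 * u ^ 5 + 611712 * u ^ 4 - 933120 * u ^ 3 + 419904 * u ^ 2) * X ^ 3 := by
  simp only [map_add, map_sub, map_mul, map_neg, map_pow, map_ofNat]
  ring

/-- Natural numbers that are units in `R` can be cancelled in `R[X]`. -/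
theorem Polynomial.natCast_mul_cancel {R : Type*} [CommRing R] {n : ℕ} (hn : IsUnit (n : R))
    {f g : R[X]} (h : (n : R[X]) * f = n * g) : f = g := by
  have hu : IsUnit (n : R[X]) := by simpa using hn.map (C : R →+* R[X])
  exact hu.mul_left_cancel h

/-- Even case: the discriminant of the monic cubic `x³ − (p₂²/4)x² + (p₀ − p₂q₂/2)x + (q₀ − q₂²/4)`
over `R[u]` equals `81u²(u−1)²(u−9)²/64`. Here `A = −p₂²/4`, `B = p₀ − p₂q₂/2`, `C = q₀ − q₂²/4`. -/
theorem stmt_10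
    {R : Type*} [CommRing R]
    (h2 : IsUnit (2 : R)) (h3 : IsUnit (3 : R)) (h5 : IsUnit (5 : R)) (h7 : IsUnit (7 : R))
    (Q : Polynomial (Polynomial R))
    (hQ : Q = X ^ 3 * (X ^ 2 - 1) ^ 2 * (X ^ 2 - 4) * (X ^ 2 - 9) ^ 2 * (X ^ 2 - 16) *
      (X ^ 2 - C X) ^ 2 *
      (X ^ 4 - (2 + 2 * C X) * X ^ 2 + (1 - C X) ^ 2) *
      (X ^ 4 - (18 + 2 * C X) * X ^ 2 + (9 - C X) ^ 2))
    (ε : ℕ → Polynomial R) (hε : ∀ m ≤ 27, ε m = Q.coeff (27 - m))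
    (p₂ p₁ q₂ p₀ q₁ q₀ : Polynomial R)
    (hp₂ : 12 * p₂ = ε 2)
    (hp₁ : 48 * p₁ = ε 5)
    (hq₂ : 96 * q₂ = ε 6 - 168 * p₂ ^ 3)
    (hp₀ : 480 * p₀ = ε 8 - 294 * p₂ ^ 4 - 528 * p₂ * q₂)
    (hq₁ : 1344 * q₁ = ε 9 - 1008 * p₁ * p₂ ^ 2)
    (hq₀ : 17280 * q₀ = ε 12 - 608 * p₁ ^ 2 * p₂ - 4768 * p₀ * p₂ ^ 2 - 252 * p₂ ^ 6 -
      1200 * p₂ ^ 3 * q₂ + 1248 * q₂ ^ 2)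
    (A B C : Polynomial R)
    (hA : 4 * A = -(p₂ ^ 2))
    (hB : 2 * B = 2 * p₀ - p₂ * q₂)
    (hC : 4 * C = 4 * q₀ - q₂ ^ 2)
    : 64 * (18 * A * B * C - 4 * A ^ 3 * C + A ^ 2 * B ^ 2 - 4 * B ^ 3 - 27 * C ^ 2) =
      81 * X ^ 2 * (X - 1) ^ 2 * (X - 9) ^ 2 := by
  rw [expand_evenCase] at hQ
  have hε2 : ε 2 = -6 * X - 60 := by
    rw [hε 2 (by norm_num), hQ]
    simp only [coeff_add, coeff_C_mul, coeff_X_pow]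
    norm_num
  have hε5 : ε 5 = 0 := by
    rw [hε 5 (by norm_num), hQ]
    simp only [coeff_add, coeff_C_mul, coeff_X_pow]
    norm_num
  have hε6 : ε 6 = -20 * X ^ 3 - 640 * X ^ 2 - 6220 * X - 20360 := by
    rw [hε 6 (by norm_num), hQ]
    simp only [coeff_add, coeff_C_mul, coeff_X_pow]
    norm_num
  have hε8 : ε 8 = 15 * X ^ 4 + 760 * X ^ 3 + 10750 * X ^ 2 + 71140 * X + 163590 := by
    rw [hε 8 (by norm_num), hQ]
    simp only [coeff_add, coeff_C_mul, coeff_X_pow]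
    norm_num
  have hε12 : ε 12 = X ^ 6 + 220 * X ^ 5 + 6448 * X ^ 4 + 66060 * X ^ 3 + 558616 * X ^ 2 +
      2117020 * X + 2328220 := by
    rw [hε 12 (by norm_num), hQ]
    simp only [coeff_add, coeff_C_mul, coeff_X_pow]
    norm_num
  have u6 : IsUnit ((6 : ℕ) : R) := by
    convert h2.mul h3 using 1; norm_num
  have u30 : IsUnit ((30 : ℕ) : R) := by
    convert (h2.mul h3).mul h5 using 1; norm_num
  have u48 : IsUnit ((48 : ℕ) : R) := by
    convert (h2.pow 4).mul h3 using 1; norm_num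
  have uD : IsUnit ((12230590464 : ℕ) : R) := by
    convert ((h2.pow 12).mul (h3.pow 3)).pow 2 using 1; norm_num
  have ep₂ : 2 * p₂ = -X - 10 :=
    natCast_mul_cancel u6 (by push_cast; linear_combination hp₂ + hε2)
  have ep₁ : p₁ = 0 :=
    natCast_mul_cancel u48 (by push_cast; linear_combination hp₁ + hε5)
  have eq₂ : 96 * q₂ = X ^ 3 - 10 * X ^ 2 + 80 * X + 640 := by
    have h : 96 * q₂ = ε 6 - 21 * (2 * p₂) ^ 3 := by linear_combination hq₂
    rw [h, hε6, ep₂]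
    ring
  have ep₀ : 768 * p₀ = -X ^ 4 + 40 * X ^ 3 - 528 * X ^ 2 + 2560 * X - 4096 := by
    have h : 5 * (768 * p₀) =
        8 * ε 8 - 147 * (2 * p₂) ^ 4 - 22 * (2 * p₂) * (96 * q₂) := by
      linear_combination 8 * hp₀
    rw [hε8, ep₂, eq₂] at h
    refine natCast_mul_cancel (n := 5) (mod_cast h5) ?_
    push_cast
    rw [h]
    ring
  have eq₀ : 55296 * q₀ =
      X ^ 6 - 60 * X ^ 5 + 1392 * X ^ 4 - 15680 * X ^ 3 + 89088 * X ^ 2 - 245760 * X + 262144 := by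
    have h : 30 * (55296 * q₀) = 96 * ε 12 - 149 * (768 * p₀) * (2 * p₂) ^ 2 -
        378 * (2 * p₂) ^ 6 - 150 * (2 * p₂) ^ 3 * (96 * q₂) + 13 * (96 * q₂) ^ 2 := by
      rw [ep₁] at hq₀
      linear_combination 96 * hq₀
    rw [hε12, ep₂, eq₂, ep₀] at h
    refine natCast_mul_cancel u30 ?_
    push_cast
    rw [h]
    ring
  have eA : 16 * A = -X ^ 2 - 20 * X - 100 := by
    have h : 16 * A = -(2 * p₂) ^ 2 := by linear_combination 4 * hA
    rw [h, ep₂]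
    ring
  have eB : 768 * B = X ^ 4 + 40 * X ^ 3 - 568 * X ^ 2 + 5440 * X + 8704 := by
    have h : 768 * B = 768 * p₀ - 2 * (2 * p₂) * (96 * q₂) := by linear_combination 384 * hB
    rw [h, ep₀, ep₂, eq₂]
    ring
  have eC : 110592 * C =
      -X ^ 6 - 60 * X ^ 5 + 2004 * X ^ 4 - 30400 * X ^ 3 + 197376 * X ^ 2 - 798720 * X - 704512 := by
    have h : 110592 * C = 2 * (55296 * q₀) - 3 * (96 * q₂) ^ 2 := by linear_combination 27648 * hC
    rw [h, eq₀, eq₂]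
    ring
  refine natCast_mul_cancel uD ?_
  push_cast
  calc (12230590464 : R[X]) *
        (64 * (18 * A * B * C - 4 * A ^ 3 * C + A ^ 2 * B ^ 2 - 4 * B ^ 3 - 27 * C ^ 2))
      = 64 * (162 * (16 * A) * (768 * B) * (110592 * C) - 108 * (16 * A) ^ 3 * (110592 * C) +
          81 * (16 * A) ^ 2 * (768 * B) ^ 2 - 108 * (768 * B) ^ 3 - 27 * (110592 * C) ^ 2) := by
        ring
    _ = 12230590464 * (81 * X ^ 2 * (X - 1) ^ 2 * (X - 9) ^ 2) := by
        rw [eA, eB, eC]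
        ring
end

section
/- With the notation of the odd-case construction: the Weierstrass curve over R[u] with coefficients (a₁, a₂, a₃, a₄, a₆) = (0, 0, 0, p₀, q₀), i.e. the curve y² = x³ + p₀x + q₀, has discriminant zero; equivalently, −16(4p₀³ + 27q₀²) = 0 in R[u]. -/
open Polynomial

/-- The degree 27 polynomial of the odd case, expanded in powers of the outer variable. -/
theorem odd_polynomial_expansion {A : Type*} [CommRing A] (u : A) :
    (X ^ 3 * (X ^ 2 - 9) ^ 2 * (X ^ 2 - C u) ^ 3 * (X ^ 2 - 4 * C u) ^ 2 * (X ^ 2 - 9 * C u) *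
      (X ^ 4 - (18 + 2 * C u) * X ^ 2 + (9 - C u) ^ 2) *
      (X ^ 4 - (18 + 8 * C u) * X ^ 2 + (9 - 4 * C u) ^ 2) : A[X]) =
      X ^ 27 +
      C (-54 - 30 * u) * X ^ 25 +
      C (1215 + 1350 * u + 375 * u ^ 2) * X ^ 23 +
      C (-14580 - 25920 * u - 13680 * u ^ 2 - 2580 * u ^ 3) * X ^ 21 +
      C (98415 + 277020 * u + 210600 * u ^ 2 + 75780 * u ^ 3 + 10815 * u ^ 4) * X ^ 19 +
      C (-354294 - 1771470 * u - 1828332 * u ^ 2 - 899100 * u ^ 3 - 257094 * u ^ 4 - 28830 * u ^ 5) * X ^ 17 +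
      C (531441 + 6495390 * u + 10254843 * u ^ 2 + 5598720 * u ^ 3 + 2353131 * u ^ 4 + 558990 * u ^ 5 + 49545 * u ^ 6) * X ^ 15 +
      C (-10628820 * u - 38499948 * u ^ 2 - 21651300 * u ^ 3 - 10144764 * u ^ 4 - 3960900 * u ^ 5 - 791028 * u ^ 6 - 54480 * u ^ 7) * X ^ 13 +
      C (75464622 * u ^ 2 + 79125660 * u ^ 3 + 10372941 * u ^ 4 + 15848460 * u ^ 5 + 3753702 * u ^ 6 + 746280 * u ^ 7 + 36960 * u ^ 8) * X ^ 11 +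
      C (-244462860 * u ^ 3 + 19013778 * u ^ 4 - 10431990 * u ^ 5 - 16449156 * u ^ 6 - 1467720 * u ^ 7 - 480672 * u ^ 8 - 14080 * u ^ 9) * X ^ 9 +
      C (378917433 * u ^ 4 - 236786490 * u ^ 5 + 66193929 * u ^ 6 + 2886840 * u ^ 7 + 55728 * u ^ 8 + 201600 * u ^ 9 + 2304 * u ^ 10) * X ^ 7 +
      C (-276349320 * u ^ 5 + 256036464 * u ^ 6 - 84243240 * u ^ 7 + 8024832 * u ^ 8 - 207360 * u ^ 9 - 41472 * u ^ 10) * X ^ 5 +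
      C (76527504 * u ^ 6 - 85030560 * u ^ 7 + 31177872 * u ^ 8 - 4199040 * u ^ 9 + 186624 * u ^ 10) * X ^ 3 := by
  simp only [map_add, map_sub, map_neg, map_mul, map_pow, map_ofNat]
  ring

/-- Odd case: the Weierstrass curve `y² = x³ + p₀x + q₀` over `R[u]` has discriminant zero. -/
theorem stmt_12
    {R : Type*} [CommRing R]
    (h2 : IsUnit (2 : R)) (h3 : IsUnit (3 : R)) (h5 : IsUnit (5 : R)) (h7 : IsUnit (7 : R))
    (Q : Polynomial (Polynomial R))
    (hQ : Q = X ^ 3 * (X ^ 2 - 9) ^ 2 * (X ^ 2 - C X) ^ 3 * (X ^ 2 - 4 * C X) ^ 2 * (X ^ 2 - 9 * C X) *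
      
      (X ^ 4 - (18 + 2 * C X) * X ^ 2 + (9 - C X) ^ 2) *
      (X ^ 4 - (18 + 8 * C X) * X ^ 2 + (9 - 4 * C X) ^ 2))
    (ε : ℕ → Polynomial R) (hε : ∀ m ≤ 27, ε m = Q.coeff (27 - m))
    (p₂ p₁ q₂ p₀ q₁ q₀ : Polynomial R)
    (hp₂ : 12 * p₂ = ε 2)
    (hp₁ : 48 * p₁ = ε 5)
    (hq₂ : 96 * q₂ = ε 6 - 168 * p₂ ^ 3)
    (hp₀ : 480 * p₀ = ε 8 - 294 * p₂ ^ 4 - 528 * p₂ * q₂)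
    (hq₁ : 1344 * q₁ = ε 9 - 1008 * p₁ * p₂ ^ 2)
    (hq₀ : 17280 * q₀ = ε 12 - 608 * p₁ ^ 2 * p₂ - 4768 * p₀ * p₂ ^ 2 - 252 * p₂ ^ 6 -
      1200 * p₂ ^ 3 * q₂ + 1248 * q₂ ^ 2)
    : -16 * (4 * p₀ ^ 3 + 27 * q₀ ^ 2) = 0 := by
  subst hQ
  have hu (n : ℕ) [n.AtLeastTwo] (h : IsUnit (ofNat(n) : R)) : IsUnit (ofNat(n) : R[X]) := by
    simpa only [map_ofNat] using h.map (C : R →+* R[X])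
  simp only [odd_polynomial_expansion] at hε
  have e2 : ε 2 = -54 - 30 * X := by
    simp [hε 2 (by norm_num), coeff_X_pow, -map_add, -map_sub, -map_mul, -map_neg]
  have e5 : ε 5 = 0 := by
    simp [hε 5 (by norm_num), coeff_X_pow, -map_add, -map_sub, -map_mul, -map_neg]
  have e6 : ε 6 = -14580 - 25920 * X - 13680 * X ^ 2 - 2580 * X ^ 3 := by
    simp [hε 6 (by norm_num), coeff_X_pow, -map_add, -map_sub, -map_mul, -map_neg]
  have e8 : ε 8 = 98415 + 277020 * X + 210600 * X ^ 2 + 75780 * X ^ 3 + 10815 * X ^ 4 := by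
    simp [hε 8 (by norm_num), coeff_X_pow, -map_add, -map_sub, -map_mul, -map_neg]
  have e12 : ε 12 = 531441 + 6495390 * X + 10254843 * X ^ 2 + 5598720 * X ^ 3 + 2353131 * X ^ 4 + 558990 * X ^ 5 + 49545 * X ^ 6 := by
    simp [hε 12 (by norm_num), coeff_X_pow, -map_add, -map_sub, -map_mul, -map_neg]
  have u2 : IsUnit (2 : R[X]) := hu 2 h2
  have u3 : IsUnit (3 : R[X]) := hu 3 h3
  have u5 : IsUnit (5 : R[X]) := hu 5 h5
  have p₁_eq : p₁ = 0 := by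
    apply ((u2.pow 4).mul u3).mul_left_cancel
    linear_combination hp₁ + e5
  have p₂_eq : 2 * p₂ = -(9 + 5 * X) := by
    apply (u2.mul u3).mul_left_cancel
    linear_combination hp₂ + e2
  have q₂_eq : 32 * q₂ = 243 - 135 * X + 165 * X ^ 2 + 15 * X ^ 3 := by
    apply u3.mul_left_cancel
    have hpow : (2 * p₂) ^ 3 = (-(9 + 5 * X)) ^ 3 := by rw [p₂_eq]
    linear_combination hq₂ + e6 - 21 * hpow
  have p₀_eq : 256 * p₀ = -27 * (X ^ 2 - 10 * X + 9) ^ 2 := by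
    apply (u3.mul u5).mul_left_cancel
    have hpow : (2 * p₂) ^ 4 = (-(9 + 5 * X)) ^ 4 := by rw [p₂_eq]
    have hmul := congrArg₂ (· * ·) p₂_eq q₂_eq
    linear_combination 8 * hp₀ + 8 * e8 - 147 * hpow - 66 * hmul
  have q₀_eq : 2048 * q₀ = 27 * (X ^ 2 - 10 * X + 9) ^ 3 := by
    apply ((u2.mul (u3.pow 3)).mul u5).mul_left_cancel
    have hpow : (2 * p₂) ^ 6 = (-(9 + 5 * X)) ^ 6 := by rw [p₂_eq]
    have hp₀p₂ : (256 * p₀) * (2 * p₂) ^ 2 =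
        (-27 * (X ^ 2 - 10 * X + 9) ^ 2) * (-(9 + 5 * X)) ^ 2 := by rw [p₀_eq, p₂_eq]
    have hp₂q₂ : (2 * p₂) ^ 3 * (32 * q₂) =
        (-(9 + 5 * X)) ^ 3 * (243 - 135 * X + 165 * X ^ 2 + 15 * X ^ 3) := by rw [p₂_eq, q₂_eq]
    have hq₂sq : (32 * q₂) ^ 2 = (243 - 135 * X + 165 * X ^ 2 + 15 * X ^ 3) ^ 2 := by rw [q₂_eq]
    rw [p₁_eq] at hq₀
    linear_combination 32 * hq₀ + 32 * e12 - 149 * hp₀p₂ - 126 * hpow - 150 * hp₂q₂ + 39 * hq₂sq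
  have hp₀cube : (256 * p₀) ^ 3 = (-27 * (X ^ 2 - 10 * X + 9) ^ 2) ^ 3 := by rw [p₀_eq]
  have hq₀sq : (2048 * q₀) ^ 2 = (27 * (X ^ 2 - 10 * X + 9) ^ 3) ^ 2 := by rw [q₀_eq]
  apply (u2.pow 22).mul_left_cancel
  linear_combination -16 * hp₀cube - 16 * 27 * hq₀sq
end

section
/- With the notation of the odd-case construction: the c₄-invariant of the Weierstrass curve y² = x³ + p₀x + q₀ over R[u], namely −48p₀, equals 81(u−1)²(u−9)²/16 in R[u]. -/
open Polynomial

/-- Expansion in powers of `s` of the degree 27 product of the odd case. -/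
theorem odd_case_expansion {A : Type*} [CommRing A] (u s : A) :
    s ^ 3 * (s ^ 2 - 9) ^ 2 * (s ^ 2 - u) ^ 3 * (s ^ 2 - 4 * u) ^ 2 * (s ^ 2 - 9 * u) *
      (s ^ 4 - (18 + 2 * u) * s ^ 2 + (9 - u) ^ 2) *
      (s ^ 4 - (18 + 8 * u) * s ^ 2 + (9 - 4 * u) ^ 2) =
      s ^ 27 +
      (-54 - 30 * u) * s ^ 25 +
      (1215 + 1350 * u + 375 * u ^ 2) * s ^ 23 +
      (-14580 - 25920 * u - 13680 * u ^ 2 - 2580 * u ^ 3) * s ^ 21 +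
      (98415 + 277020 * u + 210600 * u ^ 2 + 75780 * u ^ 3 + 10815 * u ^ 4) * s ^ 19 +
      (-354294 - 1771470 * u - 1828332 * u ^ 2 - 899100 * u ^ 3 - 257094 * u ^ 4 -
        28830 * u ^ 5) * s ^ 17 +
      (531441 + 6495390 * u + 10254843 * u ^ 2 + 5598720 * u ^ 3 + 2353131 * u ^ 4 +
        558990 * u ^ 5 + 49545 * u ^ 6) * s ^ 15 +
      (-10628820 * u - 38499948 * u ^ 2 - 21651300 * u ^ 3 - 10144764 * u ^ 4 -
        3960900 * u ^ 5 - 791028 * u ^ 6 - 54480 * u ^ 7) * s ^ 13 +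
      (75464622 * u ^ 2 + 79125660 * u ^ 3 + 10372941 * u ^ 4 + 15848460 * u ^ 5 +
        3753702 * u ^ 6 + 746280 * u ^ 7 + 36960 * u ^ 8) * s ^ 11 +
      (-244462860 * u ^ 3 + 19013778 * u ^ 4 - 10431990 * u ^ 5 - 16449156 * u ^ 6 -
        1467720 * u ^ 7 - 480672 * u ^ 8 - 14080 * u ^ 9) * s ^ 9 +
      (378917433 * u ^ 4 - 236786490 * u ^ 5 + 66193929 * u ^ 6 + 2886840 * u ^ 7 +
        55728 * u ^ 8 + 201600 * u ^ 9 + 2304 * u ^ 10) * s ^ 7 +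
      (-276349320 * u ^ 5 + 256036464 * u ^ 6 - 84243240 * u ^ 7 + 8024832 * u ^ 8 -
        207360 * u ^ 9 - 41472 * u ^ 10) * s ^ 5 +
      (76527504 * u ^ 6 - 85030560 * u ^ 7 + 31177872 * u ^ 8 - 4199040 * u ^ 9 +
        186624 * u ^ 10) * s ^ 3 := by
  ring

/-- The coefficients of degrees 25, 21 and 19 of the degree 27 polynomial of the odd case. -/
theorem odd_case_coeff {A : Type*} [CommRing A] (u : A) (Q : A[X])
    (hQ : Q = X ^ 3 * (X ^ 2 - 9) ^ 2 * (X ^ 2 - C u) ^ 3 * (X ^ 2 - 4 * C u) ^ 2 *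
      (X ^ 2 - 9 * C u) *
      (X ^ 4 - (18 + 2 * C u) * X ^ 2 + (9 - C u) ^ 2) *
      (X ^ 4 - (18 + 8 * C u) * X ^ 2 + (9 - 4 * C u) ^ 2)) :
    Q.coeff 25 = -54 - 30 * u ∧
    Q.coeff 21 = -14580 - 25920 * u - 13680 * u ^ 2 - 2580 * u ^ 3 ∧
    Q.coeff 19 = 98415 + 277020 * u + 210600 * u ^ 2 + 75780 * u ^ 3 + 10815 * u ^ 4 := by
  have C_numeral (n : ℕ) [n.AtLeastTwo] : (OfNat.ofNat n : A[X]) = C (OfNat.ofNat n) := rfl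
  rw [odd_case_expansion] at hQ
  simp only [C_numeral, ← C_mul, ← C_pow, ← C_add, ← C_sub, ← C_neg] at hQ
  refine ⟨?_, ?_, ?_⟩ <;>
    simp [hQ, coeff_X_pow, -map_add, -map_sub, -map_mul, -map_pow, -map_neg]

/-- Odd case: the `c₄`-invariant `−48p₀` of `y² = x³ + p₀x + q₀` equals `81(u−1)²(u−9)²/16` in `R[u]`. -/
theorem stmt_13
    {R : Type*} [CommRing R]
    (h2 : IsUnit (2 : R)) (h3 : IsUnit (3 : R)) (h5 : IsUnit (5 : R)) (h7 : IsUnit (7 : R))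
    (Q : Polynomial (Polynomial R))
    (hQ : Q = X ^ 3 * (X ^ 2 - 9) ^ 2 * (X ^ 2 - C X) ^ 3 * (X ^ 2 - 4 * C X) ^ 2 * (X ^ 2 - 9 * C X) *
      
      (X ^ 4 - (18 + 2 * C X) * X ^ 2 + (9 - C X) ^ 2) *
      (X ^ 4 - (18 + 8 * C X) * X ^ 2 + (9 - 4 * C X) ^ 2))
    (ε : ℕ → Polynomial R) (hε : ∀ m ≤ 27, ε m = Q.coeff (27 - m))
    (p₂ p₁ q₂ p₀ q₁ q₀ : Polynomial R)
    (hp₂ : 12 * p₂ = ε 2)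
    (hp₁ : 48 * p₁ = ε 5)
    (hq₂ : 96 * q₂ = ε 6 - 168 * p₂ ^ 3)
    (hp₀ : 480 * p₀ = ε 8 - 294 * p₂ ^ 4 - 528 * p₂ * q₂)
    (hq₁ : 1344 * q₁ = ε 9 - 1008 * p₁ * p₂ ^ 2)
    (hq₀ : 17280 * q₀ = ε 12 - 608 * p₁ ^ 2 * p₂ - 4768 * p₀ * p₂ ^ 2 - 252 * p₂ ^ 6 -
      1200 * p₂ ^ 3 * q₂ + 1248 * q₂ ^ 2)
    : 16 * (-48 * p₀) = 81 * (X - 1) ^ 2 * (X - 9) ^ 2 := by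
  obtain ⟨coeff₂₅, coeff₂₁, coeff₁₉⟩ := odd_case_coeff X Q hQ
  have unit₂ : IsUnit (2 : R[X]) := isUnit_C.mpr h2
  have unit₃ : IsUnit (3 : R[X]) := isUnit_C.mpr h3
  have unit₅ : IsUnit (5 : R[X]) := isUnit_C.mpr h5
  rw [hε 2 (by norm_num), coeff₂₅] at hp₂
  rw [hε 6 (by norm_num), coeff₂₁] at hq₂
  rw [hε 8 (by norm_num), coeff₁₉] at hp₀
  have two_p₂ : 2 * p₂ = -(9 + 5 * X) :=
    (unit₂.mul unit₃).mul_left_cancel (by linear_combination hp₂)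
  have p₂_cube : (2 * p₂) ^ 3 = (-(9 + 5 * X)) ^ 3 := by rw [two_p₂]
  have p₂_fourth : (2 * p₂) ^ 4 = (-(9 + 5 * X)) ^ 4 := by rw [two_p₂]
  have q₂_eq : 32 * q₂ = 243 - 135 * X + 165 * X ^ 2 + 15 * X ^ 3 :=
    unit₃.mul_left_cancel (by linear_combination hq₂ - 21 * p₂_cube)
  have p₂_mul_q₂ : (2 * p₂) * (32 * q₂) =
      -(9 + 5 * X) * (243 - 135 * X + 165 * X ^ 2 + 15 * X ^ 3) := by rw [two_p₂, q₂_eq]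
  exact unit₅.mul_left_cancel (by
    linear_combination -8 * hp₀ + 147 * p₂_fourth + 66 * p₂_mul_q₂)
end

section
/- With the notation of the odd-case construction: the discriminant of the monic cubic polynomial x³ − (p₂²/4)x² + (p₀ − p₂q₂/2)x + (q₀ − q₂²/4) over R[u] equals 729u⁶(u−9)²(u−9/4)²/16 in R[u]. -/
open Polynomial

/-- The degree-27 product, expanded in powers of `S`. -/
theorem spectral_product_expand {K : Type*} [CommRing K] (u S : K) :
    S ^ 3 * (S ^ 2 - 9) ^ 2 * (S ^ 2 - u) ^ 3 * (S ^ 2 - 4 * u) ^ 2 * (S ^ 2 - 9 * u) *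
      (S ^ 4 - (18 + 2 * u) * S ^ 2 + (9 - u) ^ 2) *
      (S ^ 4 - (18 + 8 * u) * S ^ 2 + (9 - 4 * u) ^ 2) =
    S ^ 27 +
      (-30 * u - 54) * S ^ 25 +
      (375 * u ^ 2 + 1350 * u + 1215) * S ^ 23 +
      (-2580 * u ^ 3 - 13680 * u ^ 2 - 25920 * u - 14580) * S ^ 21 +
      (10815 * u ^ 4 + 75780 * u ^ 3 + 210600 * u ^ 2 + 277020 * u + 98415) * S ^ 19 +
      (-28830 * u ^ 5 - 257094 * u ^ 4 - 899100 * u ^ 3 - 1828332 * u ^ 2 - 1771470 * u - 354294) *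
      S ^ 17 +
      (49545 * u ^ 6 + 558990 * u ^ 5 + 2353131 * u ^ 4 + 5598720 * u ^ 3 + 10254843 * u ^ 2 +
      6495390 * u + 531441) * S ^ 15 +
      (-54480 * u ^ 7 - 791028 * u ^ 6 - 3960900 * u ^ 5 - 10144764 * u ^ 4 - 21651300 * u ^ 3 -
      38499948 * u ^ 2 - 10628820 * u) * S ^ 13 +
      (36960 * u ^ 8 + 746280 * u ^ 7 + 3753702 * u ^ 6 + 15848460 * u ^ 5 + 10372941 * u ^ 4 +
      79125660 * u ^ 3 + 75464622 * u ^ 2) * S ^ 11 +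
      (-14080 * u ^ 9 - 480672 * u ^ 8 - 1467720 * u ^ 7 - 16449156 * u ^ 6 - 10431990 * u ^ 5 +
      19013778 * u ^ 4 - 244462860 * u ^ 3) * S ^ 9 +
      (2304 * u ^ 10 + 201600 * u ^ 9 + 55728 * u ^ 8 + 2886840 * u ^ 7 + 66193929 * u ^ 6 -
      236786490 * u ^ 5 + 378917433 * u ^ 4) * S ^ 7 +
      (-41472 * u ^ 10 - 207360 * u ^ 9 + 8024832 * u ^ 8 - 84243240 * u ^ 7 + 256036464 * u ^ 6 -
      276349320 * u ^ 5) * S ^ 5 +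
      (186624 * u ^ 10 - 4199040 * u ^ 9 + 31177872 * u ^ 8 - 85030560 * u ^ 7 + 76527504 * u ^ 6) *
      S ^ 3 := by
  ring

/-- Some coefficients of an odd monic polynomial of degree 27 without linear term. -/
theorem coeff_odd_monic {K : Type*} [CommRing K]
    (a2 a4 a6 a8 a10 a12 a14 a16 a18 a20 a22 a24 : K) (Q : K[X])
    (hQ : Q = X ^ 27 +
      C a2 * X ^ 25 +
      C a4 * X ^ 23 +
      C a6 * X ^ 21 +
      C a8 * X ^ 19 +
      C a10 * X ^ 17 +
      C a12 * X ^ 15 +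
      C a14 * X ^ 13 +
      C a16 * X ^ 11 +
      C a18 * X ^ 9 +
      C a20 * X ^ 7 +
      C a22 * X ^ 5 +
      C a24 * X ^ 3) :
    Q.coeff 25 = a2 ∧ Q.coeff 22 = 0 ∧ Q.coeff 21 = a6 ∧ Q.coeff 19 = a8 ∧ Q.coeff 15 = a12 := by
  subst hQ
  simp [coeff_X_pow]

/-- The coefficients of the degree-27 product that enter the discriminant. -/
theorem spectral_product_coeff {K : Type*} [CommRing K] (u : K) (Q : K[X])
    (hQ : Q = X ^ 3 * (X ^ 2 - 9) ^ 2 * (X ^ 2 - C u) ^ 3 * (X ^ 2 - 4 * C u) ^ 2 *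
      (X ^ 2 - 9 * C u) * (X ^ 4 - (18 + 2 * C u) * X ^ 2 + (9 - C u) ^ 2) *
      (X ^ 4 - (18 + 8 * C u) * X ^ 2 + (9 - 4 * C u) ^ 2)) :
    Q.coeff 25 = -30 * u - 54 ∧
    Q.coeff 22 = 0 ∧
    Q.coeff 21 = -2580 * u ^ 3 - 13680 * u ^ 2 - 25920 * u - 14580 ∧
    Q.coeff 19 = 10815 * u ^ 4 + 75780 * u ^ 3 + 210600 * u ^ 2 + 277020 * u + 98415 ∧
    Q.coeff 15 =
      49545 * u ^ 6 + 558990 * u ^ 5 + 2353131 * u ^ 4 + 5598720 * u ^ 3 + 10254843 * u ^ 2 +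
      6495390 * u + 531441 := by
  rw [spectral_product_expand] at hQ
  refine coeff_odd_monic _ (375 * u ^ 2 + 1350 * u + 1215) _ _
      (-28830 * u ^ 5 - 257094 * u ^ 4 - 899100 * u ^ 3 - 1828332 * u ^ 2 - 1771470 * u - 354294)
      _ (-54480 * u ^ 7 - 791028 * u ^ 6 - 3960900 * u ^ 5 - 10144764 * u ^ 4 - 21651300 * u ^ 3 -
      38499948 * u ^ 2 - 10628820 * u)
      (36960 * u ^ 8 + 746280 * u ^ 7 + 3753702 * u ^ 6 + 15848460 * u ^ 5 + 10372941 * u ^ 4 +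
      79125660 * u ^ 3 + 75464622 * u ^ 2)
      (-14080 * u ^ 9 - 480672 * u ^ 8 - 1467720 * u ^ 7 - 16449156 * u ^ 6 - 10431990 * u ^ 5 +
      19013778 * u ^ 4 - 244462860 * u ^ 3)
      (2304 * u ^ 10 + 201600 * u ^ 9 + 55728 * u ^ 8 + 2886840 * u ^ 7 + 66193929 * u ^ 6 -
      236786490 * u ^ 5 + 378917433 * u ^ 4)
      (-41472 * u ^ 10 - 207360 * u ^ 9 + 8024832 * u ^ 8 - 84243240 * u ^ 7 + 256036464 * u ^ 6 -
      276349320 * u ^ 5)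
      (186624 * u ^ 10 - 4199040 * u ^ 9 + 31177872 * u ^ 8 - 85030560 * u ^ 7 + 76527504 * u ^ 6)
      Q ?_
  rw [hQ]
  simp only [map_add, map_sub, map_mul, map_pow, map_neg, map_ofNat]

/-- Odd case: the discriminant of the monic cubic `x³ − (p₂²/4)x² + (p₀ − p₂q₂/2)x + (q₀ − q₂²/4)`
over `R[u]` equals `729u⁶(u−9)²(u−9/4)²/16`. Here `A = −p₂²/4`, `B = p₀ − p₂q₂/2`, `C = q₀ − q₂²/4`,
and `(u−9/4)²/16 = (4u−9)²/256`. -/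
theorem stmt_14
    {R : Type*} [CommRing R]
    (h2 : IsUnit (2 : R)) (h3 : IsUnit (3 : R)) (h5 : IsUnit (5 : R)) (h7 : IsUnit (7 : R))
    (Q : Polynomial (Polynomial R))
    (hQ : Q = X ^ 3 * (X ^ 2 - 9) ^ 2 * (X ^ 2 - C X) ^ 3 * (X ^ 2 - 4 * C X) ^ 2 * (X ^ 2 - 9 * C X) *
      
      (X ^ 4 - (18 + 2 * C X) * X ^ 2 + (9 - C X) ^ 2) *
      (X ^ 4 - (18 + 8 * C X) * X ^ 2 + (9 - 4 * C X) ^ 2))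
    (ε : ℕ → Polynomial R) (hε : ∀ m ≤ 27, ε m = Q.coeff (27 - m))
    (p₂ p₁ q₂ p₀ q₁ q₀ : Polynomial R)
    (hp₂ : 12 * p₂ = ε 2)
    (hp₁ : 48 * p₁ = ε 5)
    (hq₂ : 96 * q₂ = ε 6 - 168 * p₂ ^ 3)
    (hp₀ : 480 * p₀ = ε 8 - 294 * p₂ ^ 4 - 528 * p₂ * q₂)
    (hq₁ : 1344 * q₁ = ε 9 - 1008 * p₁ * p₂ ^ 2)
    (hq₀ : 17280 * q₀ = ε 12 - 608 * p₁ ^ 2 * p₂ - 4768 * p₀ * p₂ ^ 2 - 252 * p₂ ^ 6 -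
      1200 * p₂ ^ 3 * q₂ + 1248 * q₂ ^ 2)
    (A B C : Polynomial R)
    (hA : 4 * A = -(p₂ ^ 2))
    (hB : 2 * B = 2 * p₀ - p₂ * q₂)
    (hC : 4 * C = 4 * q₀ - q₂ ^ 2)
    : 256 * (18 * A * B * C - 4 * A ^ 3 * C + A ^ 2 * B ^ 2 - 4 * B ^ 3 - 27 * C ^ 2) =
      729 * X ^ 6 * (X - 9) ^ 2 * (4 * X - 9) ^ 2 := by
  obtain ⟨e2, e5, e6, e8, e12⟩ := spectral_product_coeff X Q hQ
  rw [← hε 2 (by norm_num)] at e2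
  rw [← hε 5 (by norm_num)] at e5
  rw [← hε 6 (by norm_num)] at e6
  rw [← hε 8 (by norm_num)] at e8
  rw [← hε 12 (by norm_num)] at e12
  have u2 : IsUnit (2 : R[X]) := by
    simpa only [map_ofNat] using h2.map (Polynomial.C : R →+* R[X])
  have u3 : IsUnit (3 : R[X]) := by
    simpa only [map_ofNat] using h3.map (Polynomial.C : R →+* R[X])
  have u5 : IsUnit (5 : R[X]) := by
    simpa only [map_ofNat] using h5.map (Polynomial.C : R →+* R[X])
  have cancel (a b c : ℕ) {x y : R[X]} (h : 2 ^ a * 3 ^ b * 5 ^ c * x = 2 ^ a * 3 ^ b * 5 ^ c * y) :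
      x = y :=
    (((u2.pow a).mul (u3.pow b)).mul (u5.pow c)).mul_left_cancel h
  have p₂_eq : 2 * p₂ = -5 * X - 9 :=
    cancel 1 1 0 (by linear_combination hp₂ + e2)
  have p₁_eq : p₁ = 0 := cancel 4 1 0 (by linear_combination hp₁ + e5)
  have q₂_eq : 32 * q₂ = 15 * X ^ 3 + 165 * X ^ 2 - 135 * X + 243 :=
    cancel 0 1 0 (by
      have key : 3 * (32 * q₂) = ε 6 - 21 * (2 * p₂) ^ 3 := by linear_combination hq₂
      rw [p₂_eq, e6] at key
      linear_combination key)
  have p₀_eq : 256 * p₀ =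
      -27 * X ^ 4 + 540 * X ^ 3 - 3186 * X ^ 2 + 4860 * X - 2187 :=
    cancel 0 1 1 (by
      have key : 15 * (256 * p₀) =
          8 * ε 8 - 147 * (2 * p₂) ^ 4 - 66 * (2 * p₂) * (32 * q₂) := by
        linear_combination 8 * hp₀
      rw [p₂_eq, q₂_eq, e8] at key
      linear_combination key)
  have q₀_eq : 2048 * q₀ =
      27 * X ^ 6 - 810 * X ^ 5 + 8829 * X ^ 4 - 41580 * X ^ 3 + 79461 * X ^ 2 - 65610 * X + 19683 :=
    cancel 1 3 1 (by
      have key : 270 * (2048 * q₀) = 32 * ε 12 - 19456 * p₁ ^ 2 * p₂ -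
          149 * (256 * p₀) * (2 * p₂) ^ 2 - 126 * (2 * p₂) ^ 6 -
          150 * (2 * p₂) ^ 3 * (32 * q₂) + 39 * (32 * q₂) ^ 2 := by
        linear_combination 32 * hq₀
      rw [p₁_eq, p₂_eq, q₂_eq, p₀_eq, e12] at key
      linear_combination key)
  have A_eq : 16 * A = -(2 * p₂) ^ 2 := by linear_combination 4 * hA
  have B_eq : 256 * B = 256 * p₀ - 2 * (2 * p₂) * (32 * q₂) := by linear_combination 128 * hB
  have C_eq : 4096 * C = 2 * (2048 * q₀) - (32 * q₂) ^ 2 := by linear_combination 1024 * hC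
  rw [p₂_eq] at A_eq
  rw [p₀_eq, p₂_eq, q₂_eq] at B_eq
  rw [q₀_eq, q₂_eq] at C_eq
  refine cancel 16 0 0 ?_
  have scaled : 2 ^ 16 * 3 ^ 0 * 5 ^ 0 *
      (256 * (18 * A * B * C - 4 * A ^ 3 * C + A ^ 2 * B ^ 2 - 4 * B ^ 3 - 27 * C ^ 2)) =
      18 * (16 * A) * (256 * B) * (4096 * C) - 4 * (16 * A) ^ 3 * (4096 * C) +
        (16 * A) ^ 2 * (256 * B) ^ 2 - 4 * (256 * B) ^ 3 - 27 * (4096 * C) ^ 2 := by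
    ring
  rw [scaled, A_eq, B_eq, C_eq]
  ring
end
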